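/- Let n ≥ 3 be an integer, N ∈ ℕ, λ, μ ∈ ℂ with λ, μ ∉ {m − n/2 : m ∈ ℕ}, and i ∈ ℕ. Then the diagonal coefficient A_{i,i}(λ,μ) admits the manifestly symmetric expression A_{i,i}(λ,μ) = ((−N)_{2i} / (2^{2i+1} · i!)) · [ ₃F₂(−i, N−λ, 1−N+μ; 1, 1−n/2−λ; 1) / (1−n/2−μ)_i + ₃F₂(−i, 1−N+λ, N−μ; 1, 1−n/2−μ; 1) / (1−n/2−λ)_i ]. -/

import Mathlib

/-!
After rewriting its Pochhammer symbols, `A_{i,i}(λ,μ)` is twice the first of the two summands on the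
right (`A_diag`), so the claim is that both summands agree. With `a = N - λ`, `b = 1 - N + μ`,
`c = 1 - n/2 - λ` and `d = c + 1 - a - b = 1 - n/2 - μ` this is the transformation
`(c)_m ₃F₂(-m,a,b;1,c;1) = (d)_m ₃F₂(-m,1-a,1-b;1,d;1)` (`F32_transform`).

Up to the factor `(-1)^m m!`, the left side is the coefficient of `z^m` in the formal power series
`(1-z)^{-x} ₂F₁(a,b;1;z)` with `x = 1 - c - m` (`F32_eq_coeff`). The transformation therefore follows
from Euler's identity
`(1-z)^{-x} ₂F₁(a,b;1;z) = (1-z)^{-(x+a+b-1)} ₂F₁(1-a,1-b;1;z)` (`euler_transform`).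
Both sides of Euler's identity solve the same second-order equation in `θ = z d/dz` (`ode`), whose
exponents at the origin are both `0`; hence a power series solution is determined by its constant
term (`ode_unique`).
-/

open Finset

noncomputable section

/-- Pochhammer symbol `(x)_l = x (x+1) ⋯ (x+l-1)`. -/
def pk (x : ℂ) (l : ℕ) : ℂ := Polynomial.eval x (ascPochhammer ℂ l)

/-- The coefficient `A_{i,j}(λ,μ)` (intended for `i ≤ j`). -/
def A (n N : ℕ) (lam mu : ℂ) (i j : ℕ) : ℂ :=
  ((-1 : ℂ) ^ (i + j) * pk (-(N : ℂ)) (i + j) * pk (lam - N + 1) (j - i)) /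
      ((2 : ℂ) ^ (i + j) * (Nat.factorial i : ℂ) * (Nat.factorial j : ℂ) *
        pk (1 - (n : ℂ) / 2 - mu) j * pk (lam + (n : ℂ) / 2 - i) i) *
    ∑ k ∈ Finset.range (i + 1),
      (-1 : ℂ) ^ k * (Nat.choose i k : ℂ) * pk ((j : ℂ) - i + 1 + k) (i - k) *
        pk (lam + (n : ℂ) / 2 - i) (i - k) * pk (mu - (N : ℂ) + 1) k *
        pk (lam - (N : ℂ) + 1 - k) k


/-- Terminating hypergeometric sum `₃F₂(−m,a₂,a₃;b₁,b₂;1)`. -/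
def F32 (m : ℕ) (a2 a3 b1 b2 : ℂ) : ℂ :=
  ∑ k ∈ Finset.range (m + 1),
    pk (-(m : ℂ)) k * pk a2 k * pk a3 k / (pk b1 k * pk b2 k * (Nat.factorial k : ℂ))

open PowerSeries

/-! ### Pochhammer symbols -/

lemma pk_zero (x : ℂ) : pk x 0 = 1 := by simp [pk]

lemma pk_succ (x : ℂ) (k : ℕ) : pk x (k + 1) = pk x k * (x + k) := by
  simp [pk, ascPochhammer_succ_eval]

lemma pk_add (x : ℂ) (k l : ℕ) : pk x (k + l) = pk x k * pk (x + k) l := by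
  induction l with
  | zero => simp [pk_zero]
  | succ l ih =>
    rw [← add_assoc, pk_succ, ih, pk_succ]
    push_cast
    ring

lemma pk_succ_left (x : ℂ) (k : ℕ) : pk x (k + 1) = x * pk (x + 1) k := by
  rw [add_comm, pk_add, pk_succ, pk_zero]
  simp

lemma pk_reflect (x : ℂ) (k : ℕ) : pk x k = (-1) ^ k * pk (1 - x - k) k := by
  induction k with
  | zero => simp [pk_zero]
  | succ k ih =>
    rw [pk_succ, ih, pk_succ_left]
    have : 1 - x - ((k + 1 : ℕ) : ℂ) + 1 = 1 - x - k := by push_cast; ring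
    rw [this]
    push_cast
    ring

lemma pk_one (k : ℕ) : pk 1 k = (k.factorial : ℂ) := by
  induction k with
  | zero => simp [pk_zero]
  | succ k ih =>
    rw [pk_succ, ih, Nat.factorial_succ]
    push_cast
    ring

lemma pk_ne_zero (x : ℂ) (k : ℕ) (h : ∀ j : ℕ, x + j ≠ 0) : pk x k ≠ 0 := by
  induction k with
  | zero => simp [pk_zero]
  | succ k ih => rw [pk_succ]; exact mul_ne_zero ih (h k)

lemma factorial_mul_pk (k l : ℕ) :
    (k.factorial : ℂ) * pk (1 + k) l = ((k + l).factorial : ℂ) := by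
  rw [← pk_one, ← pk_one, pk_add]

lemma pk_neg_nat (k l : ℕ) :
    pk (-((k + l : ℕ) : ℂ)) k * (l.factorial : ℂ) = (-1) ^ k * ((k + l).factorial : ℂ) := by
  rw [pk_reflect, add_comm k l, ← factorial_mul_pk l k]
  have : 1 - -((l + k : ℕ) : ℂ) - k = 1 + l := by push_cast; ring
  rw [this]
  ring

/-! ### Euler's transformation for formal power series -/

/-- The Euler operator `θ = z d/dz` on formal power series. -/
def theta (H : ℂ⟦X⟧) : ℂ⟦X⟧ := X * d⁄dX ℂ H

lemma coeff_theta (H : ℂ⟦X⟧) (k : ℕ) : coeff k (theta H) = k * coeff k H := by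
  cases k with
  | zero => simp [theta]
  | succ k =>
    rw [theta, coeff_succ_X_mul, coeff_derivative]
    push_cast
    ring

lemma theta_mul (F G : ℂ⟦X⟧) : theta (F * G) = theta F * G + F * theta G := by
  simp only [theta, Derivation.leibniz, smul_eq_mul]
  ring

lemma theta_add (F G : ℂ⟦X⟧) : theta (F + G) = theta F + theta G := by
  simp only [theta, map_add]
  ring

lemma theta_sub (F G : ℂ⟦X⟧) : theta (F - G) = theta F - theta G := by
  simp only [theta, map_sub]
  ring

lemma theta_C (c : ℂ) : theta (C c) = 0 := by
  ext k
  rw [coeff_theta, coeff_C]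
  split_ifs with h <;> simp [h]

lemma theta_one : theta 1 = 0 := by simpa using theta_C 1

lemma theta_X : theta X = X := by simp [theta]

/-- The binomial series `(1 - z)^{-x} = ∑ (x)_k z^k / k!`. -/
def binSeries (x : ℂ) : ℂ⟦X⟧ := mk fun k => pk x k / (k.factorial : ℂ)

/-- The Gauss series `₂F₁(a,b;1;z) = ∑ (a)_k (b)_k z^k / k!²`. -/
def gaussSeries (a b : ℂ) : ℂ⟦X⟧ :=
  mk fun k => pk a k * pk b k / (k.factorial : ℂ) ^ 2

lemma binSeries_eq (x : ℂ) :
    theta (binSeries x) = X * (theta (binSeries x) + C x * binSeries x) := by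
  ext k
  cases k with
  | zero => simp [coeff_theta]
  | succ k =>
    rw [coeff_succ_X_mul]
    simp only [coeff_theta, map_add, coeff_C_mul, binSeries, coeff_mk, pk_succ,
      Nat.factorial_succ]
    have h1 : (k.factorial : ℂ) ≠ 0 := by exact_mod_cast k.factorial_ne_zero
    have h2 : (k : ℂ) + 1 ≠ 0 := by exact_mod_cast k.succ_ne_zero
    push_cast
    field_simp
    ring

lemma gaussSeries_eq (a b : ℂ) :
    theta (theta (gaussSeries a b)) =
      X * (theta (theta (gaussSeries a b)) + C (a + b) * theta (gaussSeries a b)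
        + C (a * b) * gaussSeries a b) := by
  ext k
  cases k with
  | zero => simp [coeff_theta]
  | succ k =>
    rw [coeff_succ_X_mul]
    simp only [coeff_theta, map_add (coeff k), coeff_C_mul, gaussSeries, coeff_mk, pk_succ,
      Nat.factorial_succ]
    have h1 : (k.factorial : ℂ) ≠ 0 := by exact_mod_cast k.factorial_ne_zero
    have h2 : (k : ℂ) + 1 ≠ 0 := by exact_mod_cast k.succ_ne_zero
    push_cast
    field_simp
    ring

/-- The differential equation of `(1-z)^{-x} ₂F₁(a,b;1;z)`, solved for `θ² H` modulo `z`. -/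
def SolvesODE (x a b : ℂ) (H : ℂ⟦X⟧) : Prop :=
  theta (theta H) = X * ((2 - X) * theta (theta H) + C (2 * x + a + b) * (1 - X) * theta H
    + (C x * (1 - X) - C ((x - 1 + a + b) * x) * X + C (a * b) * (1 - X)) * H)

lemma ode (x a b : ℂ) : SolvesODE x a b (binSeries x * gaussSeries a b) := by
  have hP := binSeries_eq x
  have hG := gaussSeries_eq a b
  have hPP := congrArg theta hP
  unfold SolvesODE
  simp only [theta_mul, theta_add, theta_X, theta_C] at hPP ⊢
  simp only [map_add, map_mul, map_sub, map_one, map_ofNat] at hG ⊢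
  generalize theta (theta (binSeries x)) = P2 at *
  generalize theta (binSeries x) = P1 at *
  generalize binSeries x = P at *
  generalize theta (theta (gaussSeries a b)) = G2 at *
  generalize theta (gaussSeries a b) = G1 at *
  generalize gaussSeries a b = G at *
  linear_combination (1 - X) * G * hPP + (1 - X) * P * hG + 2 * (1 - X) * G1 * hP
    + (1 - C x - C a - C b) * X * G * hP

/-- Exchanging the parameters as in Euler's identity leaves the differential equation unchanged. -/
lemma SolvesODE.swap {x a b : ℂ} {H : ℂ⟦X⟧} (h : SolvesODE (x + a + b - 1) (1 - a) (1 - b) H) :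
    SolvesODE x a b H := by
  unfold SolvesODE at *
  simp only [map_add, map_mul, map_sub, map_one, map_ofNat] at h ⊢
  linear_combination h

lemma SolvesODE.sub {x a b : ℂ} {F G : ℂ⟦X⟧} (hF : SolvesODE x a b F) (hG : SolvesODE x a b G) :
    SolvesODE x a b (F - G) := by
  unfold SolvesODE at *
  simp only [theta_sub]
  linear_combination hF - hG

lemma ode_unique {x a b : ℂ} {H : ℂ⟦X⟧} (h : SolvesODE x a b H) (h0 : coeff 0 H = 0) : H = 0 := by
  ext k
  rw [map_zero]
  induction k using Nat.strong_induction_on with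
  | _ k ih =>
    cases k with
    | zero => exact h0
    | succ k =>
      have hk := congrArg (coeff (k + 1)) h
      have vanish : ∀ p F : ℂ⟦X⟧, (∀ j, j < k + 1 → coeff j F = 0) → coeff k (p * F) = 0 := by
        intro p F hF
        rw [coeff_mul]
        refine Finset.sum_eq_zero fun q hq => ?_
        rw [hF q.2 (by have := Finset.HasAntidiagonal.mem_antidiagonal.mp hq; omega), mul_zero]
      rw [coeff_succ_X_mul, map_add, map_add, vanish _ H ih,
        vanish _ (theta H) (fun j hj => by rw [coeff_theta, ih j hj, mul_zero]),
        vanish _ (theta (theta H))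
          (fun j hj => by rw [coeff_theta, coeff_theta, ih j hj, mul_zero, mul_zero]),
        coeff_theta, coeff_theta] at hk
      have h2 : ((k + 1 : ℕ) : ℂ) ≠ 0 := by exact_mod_cast k.succ_ne_zero
      simpa [h2, Nat.cast_add_one_ne_zero] using hk

lemma euler_transform (x a b : ℂ) :
    binSeries x * gaussSeries a b =
      binSeries (x + a + b - 1) * gaussSeries (1 - a) (1 - b) := by
  rw [← sub_eq_zero]
  refine ode_unique ((ode x a b).sub (ode (x + a + b - 1) (1 - a) (1 - b)).swap) ?_
  simp [binSeries, gaussSeries, pk_zero]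

/-! ### The hypergeometric transformation -/

lemma F32_eq_coeff (m : ℕ) (a b c : ℂ) (hc : ∀ j : ℕ, c + j ≠ 0) :
    F32 m a b 1 c * pk c m =
      (-1) ^ m * (m.factorial : ℂ) * coeff m (binSeries (1 - c - m) * gaussSeries a b) := by
  rw [mul_comm (binSeries _), coeff_mul, Finset.Nat.sum_antidiagonal_eq_sum_range_succ_mk, F32,
    Finset.sum_mul, Finset.mul_sum]
  refine Finset.sum_congr rfl fun k hk => ?_
  obtain ⟨l, rfl⟩ := Nat.exists_eq_add_of_le (Nat.lt_succ_iff.mp (Finset.mem_range.mp hk))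
  have hl : (l.factorial : ℂ) ≠ 0 := by exact_mod_cast l.factorial_ne_zero
  have hkf : (k.factorial : ℂ) ≠ 0 := by exact_mod_cast k.factorial_ne_zero
  have hck := pk_ne_zero c k hc
  have hrefl : pk (1 - c - ((k + l : ℕ) : ℂ)) l = (-1) ^ l * pk (c + k) l := by
    rw [pk_reflect]
    congr 2
    push_cast
    ring
  have hsq : ((-1 : ℂ) ^ l) * (-1) ^ l = 1 := by rw [← mul_pow]; simp
  simp only [binSeries, gaussSeries, coeff_mk, Nat.add_sub_cancel_left, pk_one]
  rw [hrefl, pk_add c, eq_div_of_mul_eq hl (pk_neg_nat k l), pow_add]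
  field_simp
  linear_combination (-((k + l).factorial * pk a k * pk b k * pk (c + k) l)) * hsq

lemma F32_transform (m : ℕ) (a b c d : ℂ) (hd : d = c + 1 - a - b)
    (hc0 : ∀ j : ℕ, c + j ≠ 0) (hd0 : ∀ j : ℕ, d + j ≠ 0) :
    F32 m a b 1 c * pk c m = F32 m (1 - a) (1 - b) 1 d * pk d m := by
  rw [F32_eq_coeff m a b c hc0, F32_eq_coeff m _ _ d hd0, euler_transform]
  have : 1 - c - (m : ℂ) + a + b - 1 = 1 - d - m := by rw [hd]; ring
  rw [this]

lemma A_diag (n N : ℕ) (lam mu : ℂ) (i : ℕ)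
    (hc : ∀ j : ℕ, 1 - (n : ℂ) / 2 - lam + j ≠ 0) :
    A n N lam mu i i =
      pk (-(N : ℂ)) (2 * i) / ((2 : ℂ) ^ (2 * i) * (Nat.factorial i : ℂ)) *
        (F32 i ((N : ℂ) - lam) (1 - (N : ℂ) + mu) 1 (1 - (n : ℂ) / 2 - lam) /
            pk (1 - (n : ℂ) / 2 - mu) i) := by
  set c := 1 - (n : ℂ) / 2 - lam with hcdef
  have hif : (i.factorial : ℂ) ≠ 0 := by exact_mod_cast i.factorial_ne_zero
  have hlow : ∀ k : ℕ, pk (lam + (n : ℂ) / 2 - k) k = (-1) ^ k * pk c k := by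
    intro k
    rw [pk_reflect]
    congr 2
    rw [hcdef]
    ring
  have hD : pk (lam + (n : ℂ) / 2 - i) i ≠ 0 := by
    rw [hlow]
    exact mul_ne_zero (pow_ne_zero _ (by norm_num)) (pk_ne_zero c i hc)
  have hsum : ∑ k ∈ Finset.range (i + 1),
      (-1 : ℂ) ^ k * (Nat.choose i k : ℂ) * pk ((i : ℂ) - i + 1 + k) (i - k) *
        pk (lam + (n : ℂ) / 2 - i) (i - k) * pk (mu - (N : ℂ) + 1) k *
        pk (lam - (N : ℂ) + 1 - k) k =
      (i.factorial : ℂ) * pk (lam + (n : ℂ) / 2 - i) i *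
        F32 i ((N : ℂ) - lam) (1 - (N : ℂ) + mu) 1 c := by
    rw [F32, Finset.mul_sum]
    refine Finset.sum_congr rfl fun k hk => ?_
    obtain ⟨l, rfl⟩ := Nat.exists_eq_add_of_le (Nat.lt_succ_iff.mp (Finset.mem_range.mp hk))
    have hl : (l.factorial : ℂ) ≠ 0 := by exact_mod_cast l.factorial_ne_zero
    have hkf : (k.factorial : ℂ) ≠ 0 := by exact_mod_cast k.factorial_ne_zero
    have hck := pk_ne_zero c k hc
    have h1 : pk (((k + l : ℕ) : ℂ) - ((k + l : ℕ) : ℂ) + 1 + k) l =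
        ((k + l).factorial : ℂ) / (k.factorial : ℂ) := by
      rw [eq_div_iff hkf, ← factorial_mul_pk, sub_self, zero_add, mul_comm]
    have h2 : (((k + l).choose k : ℕ) : ℂ) =
        ((k + l).factorial : ℂ) / ((k.factorial : ℂ) * (l.factorial : ℂ)) := by
      rw [eq_div_iff (mul_ne_zero hkf hl)]
      have := Nat.add_choose_mul_factorial_mul_factorial k l
      rw [Nat.choose_symm_add.symm] at this
      rw [← mul_assoc]
      exact_mod_cast this
    have h3 : pk (lam + (n : ℂ) / 2 - ((k + l : ℕ) : ℂ)) (k + l) =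
        pk (lam + (n : ℂ) / 2 - ((k + l : ℕ) : ℂ)) l * ((-1) ^ k * pk c k) := by
      rw [← hlow, add_comm k l, pk_add]
      congr 2
      push_cast
      ring
    have h4 : pk (lam - (N : ℂ) + 1 - k) k = (-1) ^ k * pk ((N : ℂ) - lam) k := by
      rw [pk_reflect]
      congr 2
      ring
    have h5 : mu - (N : ℂ) + 1 = 1 - (N : ℂ) + mu := by ring
    rw [Nat.add_sub_cancel_left, h1, h2, h3, h4, h5, pk_one,
      eq_div_of_mul_eq hl (pk_neg_nat k l)]
    field_simp
  rw [A, hsum, Nat.sub_self, pk_zero, ← two_mul]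
  have hs : (-1 : ℂ) ^ (2 * i) = 1 := by rw [pow_mul]; simp
  rw [hs]
  -- The two Pochhammer symbols are made opaque so that `field_simp` does not rewrite their arguments.
  generalize pk (lam + (n : ℂ) / 2 - i) i = D at hD ⊢
  generalize pk (1 - (n : ℂ) / 2 - mu) i = E
  field_simp

/-- the manifestly symmetric `₃F₂` expression for the diagonal
coefficient `A_{i,i}(λ,μ)`. -/
theorem statement12 (n : ℕ) (hn : 3 ≤ n) (N : ℕ) (lam mu : ℂ)
    (hlam : ∀ m : ℕ, lam ≠ (m : ℂ) - (n : ℂ) / 2)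
    (hmu : ∀ m : ℕ, mu ≠ (m : ℂ) - (n : ℂ) / 2) (i : ℕ) :
    A n N lam mu i i =
      pk (-(N : ℂ)) (2 * i) / ((2 : ℂ) ^ (2 * i + 1) * (Nat.factorial i : ℂ)) *
        (F32 i ((N : ℂ) - lam) (1 - (N : ℂ) + mu) 1 (1 - (n : ℂ) / 2 - lam) /
            pk (1 - (n : ℂ) / 2 - mu) i +
          F32 i (1 - (N : ℂ) + lam) ((N : ℂ) - mu) 1 (1 - (n : ℂ) / 2 - mu) /
            pk (1 - (n : ℂ) / 2 - lam) i) := by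
  have hc : ∀ j : ℕ, 1 - (n : ℂ) / 2 - lam + j ≠ 0 := fun j h =>
    hlam (j + 1) (by push_cast; linear_combination -h)
  have hd : ∀ j : ℕ, 1 - (n : ℂ) / 2 - mu + j ≠ 0 := fun j h =>
    hmu (j + 1) (by push_cast; linear_combination -h)
  have key := F32_transform i ((N : ℂ) - lam) (1 - (N : ℂ) + mu) (1 - (n : ℂ) / 2 - lam)
    (1 - (n : ℂ) / 2 - mu) (by ring) hc hd
  have e1 : 1 - ((N : ℂ) - lam) = 1 - (N : ℂ) + lam := by ring
  have e2 : 1 - (1 - (N : ℂ) + mu) = (N : ℂ) - mu := by ring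
  rw [e1, e2] at key
  rw [A_diag n N lam mu i hc, ← (div_eq_div_iff (pk_ne_zero _ i hd) (pk_ne_zero _ i hc)).mpr key,
    pow_succ]
  have hif : (i.factorial : ℂ) ≠ 0 := by exact_mod_cast i.factorial_ne_zero
  have hpd := pk_ne_zero _ i hd
  field_simp
  ring

end
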